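/- (Matrix Bailey lemma / discrete star-triangle relation) Let p, q be complex numbers with |p| < 1, |q| < 1, and let t, a, k, b, c be nonzero complex numbers satisfying the balancing condition k·b·c = q·a·t, generic in the sense that every theta factor appearing in a denominator below is nonzero. Then for all integers N, m with 0 ≤ m ≤ N: ∑_{n=m}^{N} M_{Nn}(a,k) · D_n(a;b,c) · M_{nm}(t,a) = D_N(k; qt/c, qt/b) · M_{Nm}(t,k) · D_m(t;b,c). -/

import Mathlib

open Complex Real Filter Topology

/-- The infinite q-Pochhammer symbol (z;q)_inf. -/
noncomputable def qpoch (z q : ℂ) : ℂ := ∏' j : ℕ, (1 - z * q ^ j)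

/-- The elliptic gamma function Γ(z;p,q). -/
noncomputable def egamma (z p q : ℂ) : ℂ :=
  ∏' jk : ℕ × ℕ, (1 - z⁻¹ * p ^ (jk.1 + 1) * q ^ (jk.2 + 1)) / (1 - z * p ^ jk.1 * q ^ jk.2)

/-- The short Jacobi theta function θ(z;p) (base first argument). -/
noncomputable def theta (p z : ℂ) : ℂ := qpoch z p * qpoch (p * z⁻¹) p

/-- The elliptic Pochhammer symbol θ(z;p)_n for n ≥ 0 (with shift base q). -/
noncomputable def thetaPochN (p q z : ℂ) (n : ℕ) : ℂ := ∏ j ∈ Finset.range n, theta p (z * q ^ j)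

/-- The Bailey matrix M_{Nm}(a,k). -/
noncomputable def Mmat (p q a k : ℂ) (N m : ℕ) : ℂ :=
  thetaPochN p q k (N + m) * thetaPochN p q (k / a) (N - m) /
      (thetaPochN p q (q * a) (N + m) * thetaPochN p q q (N - m)) *
    (theta p (a * q ^ (2 * m)) / theta p a) * a ^ (N - m)

/-- The diagonal matrix entries D_m(a;b,c). -/
noncomputable def Dmat (p q a b c : ℂ) (m : ℕ) : ℂ :=
  thetaPochN p q b m * thetaPochN p q c m /
      (thetaPochN p q (q * a / b) m * thetaPochN p q (q * a / c) m) *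
    (q * a / (b * c)) ^ m

/-- Finite product `(p;p)_n`. -/
noncomputable def bQ (p : ℂ) (n : ℕ) : ℂ := ∏ j ∈ Finset.range n, (1 - p ^ (j + 1))

/-- Gaussian binomial coefficient. -/
noncomputable def bG (p : ℂ) (n k : ℕ) : ℂ :=
  if k ≤ n then bQ p n / (bQ p k * bQ p (n - k)) else 0

lemma one_sub_pow_ne {p : ℂ} (hp : ‖p‖ < 1) (j : ℕ) : (1 : ℂ) - p ^ (j + 1) ≠ 0 := by
  intro h
  have h1 : p ^ (j + 1) = 1 := (sub_eq_zero.mp h).symm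
  have h2 : ‖p‖ ^ (j + 1) = 1 := by rw [← norm_pow, h1, norm_one]
  have h3 : ‖p‖ ^ (j + 1) < 1 := pow_lt_one₀ (norm_nonneg _) hp (by omega)
  linarith

lemma bQ_ne {p : ℂ} (hp : ‖p‖ < 1) (n : ℕ) : bQ p n ≠ 0 :=
  Finset.prod_ne_zero_iff.mpr fun j _ => one_sub_pow_ne hp j

lemma bQ_succ (p : ℂ) (n : ℕ) : bQ p (n + 1) = bQ p n * (1 - p ^ (n + 1)) :=
  Finset.prod_range_succ _ _

lemma bG_zero {p : ℂ} (hp : ‖p‖ < 1) (n : ℕ) : bG p n 0 = 1 := by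
  have := bQ_ne hp n
  have h0 : bQ p 0 = 1 := by simp [bQ]
  simp [bG, h0, this]

lemma bG_self {p : ℂ} (hp : ‖p‖ < 1) (n : ℕ) : bG p n n = 1 := by
  have := bQ_ne hp n
  have h0 : bQ p 0 = 1 := by simp [bQ]
  simp [bG, h0, this]

lemma bG_pascal {p : ℂ} (hp : ‖p‖ < 1) (n k : ℕ) (hk : k ≤ n) :
    bG p (n + 1) (k + 1) = bG p n (k + 1) + p ^ (n - k) * bG p n k := by
  rcases hk.eq_or_lt with rfl | hlt
  · rw [bG_self hp, bG_self hp]; simp [bG]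
  · obtain ⟨d, rfl⟩ := Nat.exists_eq_add_of_lt hlt
    have e1 : k + d + 1 + 1 - (k + 1) = d + 1 := by omega
    have e2 : k + d + 1 - (k + 1) = d := by omega
    have e3 : k + d + 1 - k = d + 1 := by omega
    have h1 : k + 1 ≤ k + d + 1 + 1 := by omega
    have h2 : k + 1 ≤ k + d + 1 := by omega
    have h3 : k ≤ k + d + 1 := by omega
    simp only [bG, h1, h2, h3, if_true, e1, e2, e3, bQ_succ]
    have := bQ_ne hp (k + d)
    have := bQ_ne hp k
    have := bQ_ne hp d
    have := one_sub_pow_ne hp k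
    have := one_sub_pow_ne hp d
    field_simp
    ring

lemma q_binomial {p : ℂ} (hp : ‖p‖ < 1) (x : ℂ) (n : ℕ) :
    ∏ j ∈ Finset.range n, (1 - x * p ^ j)
      = ∑ k ∈ Finset.range (n + 1), (-1) ^ k * p ^ (k.choose 2) * x ^ k * bG p n k := by
  induction n with
  | zero => simp [bG_zero hp]
  | succ n ih =>
    rw [Finset.prod_range_succ, ih, mul_sub, mul_one]
    rw [Finset.sum_range_succ' _ (n + 1)]
    have hs : ∑ k ∈ Finset.range (n + 1), (-1) ^ k * p ^ (k.choose 2) * x ^ k * bG p n k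
        = ∑ k ∈ Finset.range (n + 1),
            (-1) ^ (k + 1) * p ^ ((k + 1).choose 2) * x ^ (k + 1) * bG p n (k + 1)
          + 1 := by
      have h1 := Finset.sum_range_succ
        (fun k => (-1) ^ k * p ^ (k.choose 2) * x ^ k * bG p n k) (n + 1)
      have h2 := Finset.sum_range_succ'
        (fun k => (-1) ^ k * p ^ (k.choose 2) * x ^ k * bG p n k) (n + 1)
      have h3 : bG p n (n + 1) = 0 := by simp [bG]
      simp only [h3, mul_zero, add_zero] at h1
      rw [← h1, h2]
      simp [bG_zero hp]
    rw [Finset.sum_mul]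
    nth_rewrite 1 [hs]
    have : ∀ k ∈ Finset.range (n + 1),
        (-1) ^ (k + 1) * p ^ ((k + 1).choose 2) * x ^ (k + 1) * bG p (n + 1) (k + 1)
        = (-1) ^ (k + 1) * p ^ ((k + 1).choose 2) * x ^ (k + 1) * bG p n (k + 1)
          - (-1) ^ k * p ^ (k.choose 2) * x ^ k * bG p n k * (x * p ^ n) := by
      intro k hk
      have hk' : k ≤ n := by simpa [Nat.lt_succ_iff] using hk
      rw [bG_pascal hp n k hk']
      have e : (k + 1).choose 2 = k + k.choose 2 := by
        rw [Nat.choose_succ_succ' k 1]; simp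
      have e2 : p ^ n = p ^ k * p ^ (n - k) := by rw [← pow_add]; congr 1; omega
      rw [e, e2, pow_add]
      ring
    rw [Finset.sum_congr rfl this, Finset.sum_sub_distrib]
    simp [bG_zero hp]
    ring

/-- Triangular exponent `i (i-1) / 2`. -/
def tri (i : ℤ) : ℤ := i * (i - 1) / 2

lemma two_tri (i : ℤ) : 2 * tri i = i * (i - 1) := by
  unfold tri
  apply Int.mul_ediv_cancel'
  have := Int.even_mul_succ_self (i - 1)
  rw [sub_add_cancel, mul_comm] at this
  exact this.two_dvd

/-- Terms of the theta series. -/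
noncomputable def tm (p z : ℂ) (i : ℤ) : ℂ := (-1) ^ i * p ^ tri i * z ^ i

lemma tri_nat (k : ℕ) : ((k.choose 2 : ℕ) : ℤ) = tri k := by
  have h := two_tri k
  have : 2 * k.choose 2 = k * (k - 1) := by
    rw [Nat.choose_two_right]
    exact Nat.mul_div_cancel' (Nat.even_mul_pred_self k).two_dvd
  rcases k with _ | k
  · simp [tri]
  · simp at this
    push_cast at h
    zify at this
    push_cast
    linarith

lemma prodE {p z : ℂ} (hp0 : p ≠ 0) (hz : z ≠ 0) (N : ℕ) :
    (∏ j ∈ Finset.range N, (-z * (p ^ (j + 1))⁻¹)) * tm p z (-N) = 1 := by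
  induction N with
  | zero => simp [tm, tri]
  | succ n ih =>
    rw [Finset.prod_range_succ]
    have e : tri (-(n + 1 : ℕ)) = tri (-n) + (n + 1 : ℕ) := by
      have h1 := two_tri (-n)
      have h2 := two_tri (-(n + 1 : ℕ))
      push_cast at *
      linarith
    have : tm p z (-(n + 1 : ℕ)) = tm p z (-n) * (p ^ (n + 1) * z⁻¹ * (-1)) := by
      unfold tm
      rw [e, zpow_add₀ hp0, zpow_natCast]
      have e2 : (-((n + 1 : ℕ) : ℤ)) = -n + -1 := by push_cast; ring
      rw [e2, zpow_add₀ hz, zpow_add₀ (by norm_num : (-1 : ℂ) ≠ 0)]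
      norm_num
      ring
    rw [this]
    calc _ = ((∏ j ∈ Finset.range n, (-z * (p ^ (j + 1))⁻¹)) * tm p z (-n)) *
        ((-z * (p ^ (n + 1))⁻¹) * (p ^ (n + 1) * z⁻¹ * (-1))) := by ring
      _ = 1 := by rw [ih]; field_simp

lemma finite_triple {p z : ℂ} (hp : ‖p‖ < 1) (hp0 : p ≠ 0) (hz : z ≠ 0) (N : ℕ) :
    (∏ j ∈ Finset.range N, (1 - z * p ^ j)) * (∏ j ∈ Finset.range N, (1 - p * z⁻¹ * p ^ j))
      = ∑ k ∈ Finset.range (2 * N + 1), tm p z ((k : ℤ) - N) * bG p (2 * N) k := by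
  have h := q_binomial hp (z * (p ^ N)⁻¹) (2 * N)
  rw [two_mul, Finset.prod_range_add, ← two_mul] at h
  have h1 : ∏ j ∈ Finset.range N, (1 - z * (p ^ N)⁻¹ * p ^ (N + j))
      = ∏ j ∈ Finset.range N, (1 - z * p ^ j) := by
    refine Finset.prod_congr rfl fun j _ => ?_
    rw [pow_add]; field_simp
  have h2 : ∏ j ∈ Finset.range N, (1 - z * (p ^ N)⁻¹ * p ^ j)
      = (∏ j ∈ Finset.range N, (-z * (p ^ (j + 1))⁻¹)) *
        ∏ j ∈ Finset.range N, (1 - p * z⁻¹ * p ^ j) := by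
    rw [← Finset.prod_range_reflect, ← Finset.prod_mul_distrib]
    refine Finset.prod_congr rfl fun j hj => ?_
    have hj' := Finset.mem_range.mp hj
    have : p ^ N = p ^ (N - 1 - j) * p ^ (j + 1) := by rw [← pow_add]; congr 1; omega
    rw [this]
    field_simp
    ring
  rw [h1, h2] at h
  have hE := prodE hp0 hz N
  calc _ = (((∏ j ∈ Finset.range N, (-z * (p ^ (j + 1))⁻¹)) *
        ∏ j ∈ Finset.range N, (1 - p * z⁻¹ * p ^ j)) * ∏ j ∈ Finset.range N, (1 - z * p ^ j))
          * tm p z (-N) := by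
        linear_combination (-(∏ j ∈ Finset.range N, (1 - z * p ^ j)) * (∏ j ∈ Finset.range N, (1 - p * z⁻¹ * p ^ j))) * hE
    _ = _ := by
      rw [h, Finset.sum_mul]
      refine Finset.sum_congr rfl fun k _ => ?_
      have e : tri ((k : ℤ) - N) = tri k + tri (-N) + (- (N * k : ℕ) : ℤ) := by
        have h1 := two_tri (-N)
        have h2 := two_tri k
        have h3 := two_tri (k - N)
        push_cast at *
        linarith
      unfold tm
      rw [e, zpow_add₀ hp0, zpow_add₀ hp0, zpow_neg p, zpow_natCast, ← tri_nat, zpow_natCast, sub_eq_add_neg,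
        zpow_add₀ hz, zpow_add₀ (by norm_num : (-1 : ℂ) ≠ 0), zpow_natCast, zpow_natCast, mul_pow, inv_pow, ← pow_mul]
      ring

lemma tm_succ {p z : ℂ} (hp0 : p ≠ 0) (hz : z ≠ 0) (i : ℤ) :
    tm p z (i + 1) = tm p z i * (-(p ^ i * z)) := by
  have e : tri (i + 1) = tri i + i := by
    have h1 := two_tri i
    have h2 := two_tri (i + 1)
    linarith
  unfold tm
  rw [e, zpow_add₀ hp0, zpow_add₀ hz, zpow_add₀ (by norm_num : (-1 : ℂ) ≠ 0)]
  norm_num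
  ring

lemma tm_ne {p z : ℂ} (hp0 : p ≠ 0) (hz : z ≠ 0) (i : ℤ) : tm p z i ≠ 0 := by
  unfold tm
  have : (-1 : ℂ) ≠ 0 := by norm_num
  exact mul_ne_zero (mul_ne_zero (zpow_ne_zero _ this) (zpow_ne_zero _ hp0)) (zpow_ne_zero _ hz)

lemma tm_pred {p z : ℂ} (hp0 : p ≠ 0) (hz : z ≠ 0) (n : ℕ) :
    tm p z (-(n + 1 : ℕ)) = tm p z (-n) * (-(p ^ (n + 1) * z⁻¹)) := by
  have h := tm_succ hp0 hz (-(n + 1 : ℕ))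
  have e : -((n + 1 : ℕ) : ℤ) + 1 = -n := by push_cast; ring
  rw [e, zpow_neg, zpow_natCast] at h
  rw [h]
  field_simp

lemma summable_tm {p z : ℂ} (hp : ‖p‖ < 1) (hp0 : p ≠ 0) (hz : z ≠ 0) :
    Summable (fun i => ‖tm p z i‖) := by
  have hpn : Tendsto (fun n : ℕ => ‖p‖ ^ n) atTop (𝓝 0) :=
    tendsto_pow_atTop_nhds_zero_of_lt_one (norm_nonneg _) hp
  apply Summable.of_nat_of_neg
  · refine summable_of_ratio_test_tendsto_lt_one (l := 0) one_pos
      (Eventually.of_forall fun n => norm_ne_zero_iff.mpr (tm_ne hp0 hz _)) ?_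
    have : (fun n : ℕ => ‖‖tm p z ((n + 1 : ℕ) : ℤ)‖‖ / ‖‖tm p z (n : ℤ)‖‖)
        = fun n : ℕ => ‖p‖ ^ n * ‖z‖ := by
      funext n
      have h := norm_ne_zero_iff.mpr (tm_ne hp0 hz n)
      push_cast
      rw [tm_succ hp0 hz]
      simp only [norm_norm, norm_mul, norm_neg, zpow_natCast, norm_pow]
      field_simp
    rw [this]
    simpa using hpn.mul_const ‖z‖
  · refine summable_of_ratio_test_tendsto_lt_one (l := 0) one_pos
      (Eventually.of_forall fun n => norm_ne_zero_iff.mpr (tm_ne hp0 hz _)) ?_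
    have : (fun n : ℕ => ‖‖tm p z (-((n + 1 : ℕ) : ℤ))‖‖ / ‖‖tm p z (-(n : ℤ))‖‖)
        = fun n : ℕ => ‖p‖ ^ (n + 1) * ‖z⁻¹‖ := by
      funext n
      have h := norm_ne_zero_iff.mpr (tm_ne hp0 hz (-n))
      rw [tm_pred hp0 hz]
      simp only [norm_norm, norm_mul, norm_neg, norm_pow]
      field_simp
    rw [this]
    simpa using ((tendsto_add_atTop_iff_nat 1).mpr hpn).mul_const ‖z⁻¹‖

lemma summable_geo {p : ℂ} (hp : ‖p‖ < 1) (z : ℂ) : Summable (fun j : ℕ => ‖-(z * p ^ j)‖) := by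
  simp only [norm_neg, norm_mul, norm_pow]
  exact (summable_geometric_of_lt_one (norm_nonneg _) hp).mul_left _

lemma tendsto_qpoch {p : ℂ} (hp : ‖p‖ < 1) (z : ℂ) :
    Tendsto (fun N => ∏ j ∈ Finset.range N, (1 - z * p ^ j)) atTop (𝓝 (qpoch z p)) := by
  have h : Multipliable (fun j : ℕ => 1 + -(z * p ^ j)) :=
    multipliable_one_add_of_summable (summable_geo hp z)
  have := h.hasProd.tendsto_prod_nat
  simpa only [← sub_eq_add_neg, qpoch] using this

lemma tendsto_bQ {p : ℂ} (hp : ‖p‖ < 1) : Tendsto (bQ p) atTop (𝓝 (qpoch p p)) := by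
  have := tendsto_qpoch hp p
  refine this.congr fun N => ?_
  unfold bQ
  exact Finset.prod_congr rfl fun j _ => by rw [pow_succ']

lemma qpoch_self_ne {p : ℂ} (hp : ‖p‖ < 1) : qpoch p p ≠ 0 := by
  have := tprod_one_add_ne_zero_of_summable (f := fun j : ℕ => -(p * p ^ j)) ?_ (summable_geo hp p)
  · simpa only [← sub_eq_add_neg, qpoch] using this
  · intro j
    have := one_sub_pow_ne hp j
    rwa [pow_succ', sub_eq_add_neg] at this

/-- Coefficients of the finite triple product, extended by zero. -/
noncomputable def cf (p : ℂ) (N : ℕ) (i : ℤ) : ℂ :=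
  if 0 ≤ i + N then bG p (2 * N) (i + N).toNat else 0

lemma bG_bound {p : ℂ} (hp : ‖p‖ < 1) : ∃ C : ℝ, ∀ n k, ‖bG p n k‖ ≤ C := by
  have h1 := (tendsto_bQ hp).norm.bddAbove_range
  have h2 := ((tendsto_bQ hp).inv₀ (qpoch_self_ne hp)).norm.bddAbove_range
  obtain ⟨A, hA⟩ := h1
  obtain ⟨B, hB⟩ := h2
  have hA' : ∀ n, ‖bQ p n‖ ≤ A := fun n => hA ⟨n, rfl⟩
  have hB' : ∀ n, ‖(bQ p n)⁻¹‖ ≤ B := fun n => hB ⟨n, rfl⟩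
  have hA0 : 0 ≤ A := (norm_nonneg _).trans (hA' 0)
  have hB0 : 0 ≤ B := (norm_nonneg _).trans (hB' 0)
  refine ⟨A * (B * B), fun n k => ?_⟩
  unfold bG
  split_ifs with h
  · rw [div_eq_mul_inv, mul_inv, norm_mul, norm_mul]
    gcongr
    exacts [hA' _, hB' _, hB' _]
  · simp; positivity

lemma tendsto_cf {p : ℂ} (hp : ‖p‖ < 1) (i : ℤ) :
    Tendsto (fun N => cf p N i) atTop (𝓝 (qpoch p p)⁻¹) := by
  have hQ := tendsto_bQ hp
  have t1 : Tendsto (fun N : ℕ => 2 * N) atTop atTop :=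
    tendsto_atTop_mono (fun n => by simp only [id]; omega) tendsto_id
  have t2 : Tendsto (fun N : ℕ => (i + N).toNat) atTop atTop :=
    tendsto_atTop_atTop.mpr fun b => ⟨b + i.natAbs, fun n hn => by omega⟩
  have t3 : Tendsto (fun N : ℕ => 2 * N - (i + N).toNat) atTop atTop :=
    tendsto_atTop_atTop.mpr fun b => ⟨b + i.natAbs, fun n hn => by omega⟩
  have h := (hQ.comp t1).div ((hQ.comp t2).mul (hQ.comp t3))
    (mul_ne_zero (qpoch_self_ne hp) (qpoch_self_ne hp))
  have e : qpoch p p / (qpoch p p * qpoch p p) = (qpoch p p)⁻¹ := by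
    have := qpoch_self_ne hp
    field_simp
  rw [e] at h
  refine h.congr' ?_
  filter_upwards [eventually_ge_atTop i.natAbs] with N hN
  have a1 : 0 ≤ i + N := by omega
  have a2 : (i + N).toNat ≤ 2 * N := by omega
  simp [cf, bG, a1, a2]

lemma sum_cf (p z : ℂ) (N : ℕ) :
    ∑ k ∈ Finset.range (2 * N + 1), tm p z ((k : ℤ) - N) * bG p (2 * N) k
      = ∑' i : ℤ, tm p z i * cf p N i := by
  rw [tsum_eq_sum (s := (Finset.range (2 * N + 1)).image (fun k : ℕ => (k : ℤ) - N))]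
  · rw [Finset.sum_image (fun a _ b _ h => by simpa using h)]
    refine Finset.sum_congr rfl fun k _ => ?_
    simp [cf]
  · intro i hi
    have : cf p N i = 0 := by
      unfold cf bG
      split_ifs with h1 h2
      · exfalso
        apply hi
        simp only [Finset.mem_image, Finset.mem_range]
        exact ⟨(i + N).toNat, by omega, by omega⟩
      · rfl
      · rfl
    simp [this]

/-- Jacobi triple product (up to identification of the constant). -/
lemma theta_series {p z : ℂ} (hp : ‖p‖ < 1) (hp0 : p ≠ 0) (hz : z ≠ 0) :
    theta p z = (∑' i : ℤ, tm p z i) * (qpoch p p)⁻¹ := by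
  have h1 := (tendsto_qpoch hp z).mul (tendsto_qpoch hp (p * z⁻¹))
  obtain ⟨C, hC⟩ := bG_bound hp
  have h2 : Tendsto (fun N => ∑' i : ℤ, tm p z i * cf p N i) atTop
      (𝓝 (∑' i : ℤ, tm p z i * (qpoch p p)⁻¹)) := by
    refine tendsto_tsum_of_dominated_convergence (bound := fun i => ‖tm p z i‖ * C)
      ((summable_tm hp hp0 hz).mul_right C) (fun i => (tendsto_cf hp i).const_mul _) ?_
    refine Eventually.of_forall fun N i => ?_
    rw [norm_mul]
    gcongr
    unfold cf
    split_ifs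
    · exact hC _ _
    · simpa using (norm_nonneg _).trans (hC 0 0)
  rw [tsum_mul_right] at h2
  refine tendsto_nhds_unique h1 (h2.congr fun N => ?_)
  rw [← sum_cf, finite_triple hp hp0 hz]

/-- Parity splitting of pairs of integers. -/
def parEquiv : (ℤ × ℤ) ⊕ (ℤ × ℤ) ≃ ℤ × ℤ where
  toFun := Sum.elim (fun x => (x.1 + x.2, x.1 - x.2)) (fun x => (x.1 + x.2 + 1, x.1 - x.2))
  invFun := fun x => if (x.1 + x.2) % 2 = 0 then .inl ((x.1 + x.2) / 2, (x.1 - x.2) / 2)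
    else .inr ((x.1 + x.2) / 2, (x.1 - x.2) / 2)
  left_inv := by
    rintro (⟨a, b⟩ | ⟨a, b⟩)
    · have : (a + b + (a - b)) % 2 = 0 := by omega
      simp only [Sum.elim_inl, this, if_true]
      congr 2 <;> omega
    · have : ¬ (a + b + 1 + (a - b)) % 2 = 0 := by omega
      simp only [Sum.elim_inr, this, if_false]
      congr 2 <;> omega
  right_inv := by
    rintro ⟨a, b⟩
    by_cases h : (a + b) % 2 = 0
    · simp only [h, if_true, Sum.elim_inl]
      ext <;> simp <;> omega
    · simp only [h, if_false, Sum.elim_inr]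
      ext <;> simp <;> omega

/-- Even part function. -/
noncomputable def H0 (p y : ℂ) : ℂ := ∑' d : ℤ, p ^ (d * d) * y ^ (2 * d)
/-- Odd part function. -/
noncomputable def H1 (p y : ℂ) : ℂ := ∑' d : ℤ, p ^ (d * d + d) * y ^ (2 * d + 1)

lemma summable_H {p y : ℂ} (hp : ‖p‖ < 1) (hp0 : p ≠ 0) (hy : y ≠ 0) :
    Summable (fun d : ℤ => ‖p ^ (d * d) * y ^ (2 * d)‖) ∧
    Summable (fun d : ℤ => ‖p ^ (d * d + d) * y ^ (2 * d + 1)‖) := by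
  have hp2 : ‖p ^ 2‖ < 1 := by
    rw [norm_pow]; exact pow_lt_one₀ (norm_nonneg _) hp (by norm_num)
  have key : ∀ (w : ℂ) (d : ℤ), ‖tm (p ^ 2) w d‖ = ‖p ^ (d * d - d) * w ^ d‖ := by
    intro w d
    unfold tm
    have : (p ^ 2) ^ tri d = p ^ (d * d - d) := by
      rw [← zpow_natCast, ← zpow_mul]
      congr 1
      have := two_tri d
      push_cast
      linarith
    rw [this]
    simp
  constructor
  · refine (summable_tm hp2 (pow_ne_zero 2 hp0) (z := p * y ^ 2) (by positivity)).congr fun d => ?_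
    rw [key, mul_zpow, ← zpow_natCast y, ← zpow_mul, ← mul_assoc, ← zpow_add₀ hp0]
    congr 3
    · ring
  · refine ((summable_tm hp2 (pow_ne_zero 2 hp0) (z := p ^ 2 * y ^ 2) (by positivity)).mul_right
      ‖y‖).congr fun d => ?_
    rw [key, mul_zpow, ← zpow_natCast y, ← zpow_natCast p, ← zpow_mul, ← zpow_mul, ← mul_assoc,
      ← zpow_add₀ hp0, ← norm_mul, mul_assoc, zpow_add₀ hy, zpow_one]
    congr 3
    · push_cast; ring

lemma theta_mul {p x y : ℂ} (hp : ‖p‖ < 1) (hp0 : p ≠ 0) (hx : x ≠ 0) (hy : y ≠ 0) :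
    theta p (x * y) * theta p (x / y)
      = (qpoch p p)⁻¹ ^ 2 * (x * (H1 p x * H0 p y - H0 p x * H1 p y)) := by
  have hxy : x * y ≠ 0 := mul_ne_zero hx hy
  have hxy' : x / y ≠ 0 := div_ne_zero hx hy
  rw [theta_series hp hp0 hxy, theta_series hp hp0 hxy']
  have s1 := summable_tm hp hp0 hxy
  have s2 := summable_tm hp hp0 hxy'
  have hs := summable_mul_of_summable_norm s1 s2
  have hmul := tsum_mul_tsum_of_summable_norm s1 s2
  have hm1 : (-1 : ℂ) ≠ 0 := by norm_num
  have e1 : ∀ a b : ℤ, tm p (x * y) (a + b) * tm p (x / y) (a - b)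
      = (p ^ (a * a - a) * x ^ (2 * a)) * (p ^ (b * b) * y ^ (2 * b)) := by
    intro a b
    have h1 := two_tri (a + b)
    have h2 := two_tri (a - b)
    have : tri (a + b) + tri (a - b) = (a * a - a) + b * b := by linarith
    have hsgn : (-1 : ℂ) ^ (a + b) * (-1) ^ (a - b) = 1 := by
      rw [← zpow_add₀ hm1]
      exact Even.neg_one_zpow ⟨a, by ring⟩
    unfold tm
    calc _ = ((-1 : ℂ) ^ (a + b) * (-1) ^ (a - b)) * (p ^ tri (a + b) * p ^ tri (a - b))
          * ((x * y) ^ (a + b) * (x / y) ^ (a - b)) := by ring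
      _ = _ := by
        rw [hsgn, ← zpow_add₀ hp0, this, zpow_add₀ hp0, mul_zpow, div_eq_mul_inv, mul_zpow,
          inv_zpow, ← zpow_neg]
        have hxx : x ^ (2 * a) = x ^ (a + b) * x ^ (a - b) := by
          rw [← zpow_add₀ hx]; congr 1; ring
        have hyy : y ^ (2 * b) = y ^ (a + b) * y ^ (-(a - b)) := by
          rw [← zpow_add₀ hy]; congr 1; ring
        rw [hxx, hyy]
        generalize x ^ (a + b) = X1
        generalize y ^ (a + b) = X2
        ring
  have e2 : ∀ a b : ℤ, tm p (x * y) (a + b + 1) * tm p (x / y) (a - b)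
      = -((p ^ (a * a) * x ^ (2 * a + 1)) * (p ^ (b * b + b) * y ^ (2 * b + 1))) := by
    intro a b
    have h1 := two_tri (a + b + 1)
    have h2 := two_tri (a - b)
    have : tri (a + b + 1) + tri (a - b) = (a * a) + (b * b + b) := by linarith
    have hsgn : (-1 : ℂ) ^ (a + b + 1) * (-1) ^ (a - b) = -1 := by
      rw [← zpow_add₀ hm1]
      exact Odd.neg_one_zpow ⟨a, by ring⟩
    unfold tm
    calc _ = ((-1 : ℂ) ^ (a + b + 1) * (-1) ^ (a - b)) * (p ^ tri (a + b + 1) * p ^ tri (a - b))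
          * ((x * y) ^ (a + b + 1) * (x / y) ^ (a - b)) := by ring
      _ = _ := by
        rw [hsgn, ← zpow_add₀ hp0, this, zpow_add₀ hp0, mul_zpow, div_eq_mul_inv, mul_zpow,
          inv_zpow, ← zpow_neg]
        have hxx : x ^ (2 * a + 1) = x ^ (a + b + 1) * x ^ (a - b) := by
          rw [← zpow_add₀ hx]; congr 1; ring
        have hyy : y ^ (2 * b + 1) = y ^ (a + b + 1) * y ^ (-(a - b)) := by
          rw [← zpow_add₀ hy]; congr 1; ring
        rw [hxx, hyy]
        generalize x ^ (a + b + 1) = X1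
        generalize y ^ (a + b + 1) = X2
        ring
  have hG0 : ∀ a : ℤ, p ^ ((a + 1) * (a + 1) - (a + 1)) * x ^ (2 * (a + 1))
      = x * (p ^ (a * a + a) * x ^ (2 * a + 1)) := by
    intro a
    have : 2 * (a + 1) = (2 * a + 1) + 1 := by ring
    rw [this, zpow_add₀ hx (2 * a + 1) 1, zpow_one]
    have : (a + 1) * (a + 1) - (a + 1) = a * a + a := by ring
    rw [this]; ring
  obtain ⟨sx0, sx1⟩ := summable_H hp hp0 hx
  obtain ⟨sy0, sy1⟩ := summable_H hp hp0 hy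
  have sG0 : Summable (fun a : ℤ => ‖p ^ (a * a - a) * x ^ (2 * a)‖) := by
    rw [← (Equiv.addRight (1 : ℤ)).summable_iff]
    refine (sx1.mul_left ‖x‖).congr fun a => ?_
    simp only [Function.comp, Equiv.coe_addRight]
    rw [hG0, norm_mul x]
  have tG0 : ∑' a : ℤ, p ^ (a * a - a) * x ^ (2 * a) = x * H1 p x := by
    rw [← (Equiv.addRight (1 : ℤ)).tsum_eq, H1, ← tsum_mul_left]
    exact tsum_congr fun a => hG0 a
  have sG1 : Summable (fun a : ℤ => ‖p ^ (a * a) * x ^ (2 * a + 1)‖) := by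
    refine (sx0.mul_right ‖x‖).congr fun a => ?_
    rw [← norm_mul, zpow_add₀ hx, zpow_one, mul_assoc]
  have tG1 : ∑' a : ℤ, p ^ (a * a) * x ^ (2 * a + 1) = x * H0 p x := by
    rw [H0, ← tsum_mul_left]
    refine tsum_congr fun a => ?_
    rw [zpow_add₀ hx, zpow_one]; ring
  have main : (∑' i, tm p (x * y) i) * (∑' i, tm p (x / y) i)
      = x * H1 p x * H0 p y - x * H0 p x * H1 p y := by
    rw [hmul, ← parEquiv.tsum_eq]
    have hs' := parEquiv.summable_iff.mpr hs
    rw [Summable.tsum_sum (f := fun c => (fun z : ℤ × ℤ => tm p (x * y) z.1 * tm p (x / y) z.2) (parEquiv c))]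
    · have q1 := tsum_mul_tsum_of_summable_norm sG0 sy0
      have q2 := tsum_mul_tsum_of_summable_norm sG1 sy1
      rw [tG0] at q1
      rw [tG1] at q2
      change x * H1 p x * H0 p y = _ at q1
      change x * H0 p x * H1 p y = _ at q2
      rw [q1, q2, sub_eq_add_neg, ← tsum_neg]
      congr 1
      · exact tsum_congr fun c => e1 c.1 c.2
      · exact tsum_congr fun c => e2 c.1 c.2
    · exact hs'.comp_injective Sum.inl_injective
    · exact hs'.comp_injective Sum.inr_injective
  linear_combination (qpoch p p)⁻¹ ^ 2 * main

lemma theta_zero (z : ℂ) : theta 0 z = 1 - z := by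
  have : ∀ z : ℂ, qpoch z 0 = 1 - z := by
    intro z
    unfold qpoch
    rw [tprod_eq_mulSingle 0]
    · simp
    · intro j hj; simp [hj]
  simp [theta, this]

/-- The Weierstrass addition formula. -/
lemma theta_add {p : ℂ} (hp : ‖p‖ < 1) {x y u v : ℂ} (hx : x ≠ 0) (hy : y ≠ 0) (hu : u ≠ 0)
    (hv : v ≠ 0) :
    theta p (x * y) * theta p (x / y) * (theta p (u * v) * theta p (u / v))
      - theta p (x * v) * theta p (x / v) * (theta p (u * y) * theta p (u / y))
      = u / y * (theta p (y * v) * theta p (y / v) * (theta p (x * u) * theta p (x / u))) := by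
  by_cases hp0 : p = 0
  · subst hp0
    simp only [theta_zero]
    field_simp
    ring
  · rw [theta_mul hp hp0 hx hy, theta_mul hp hp0 hu hv, theta_mul hp hp0 hx hv,
      theta_mul hp hp0 hu hy, theta_mul hp hp0 hy hv, theta_mul hp hp0 hx hu]
    field_simp
    ring

section FT

lemma P_zero (p q z : ℂ) : thetaPochN p q z 0 = 1 := by simp [thetaPochN]

lemma P_last {p q z w : ℂ} {n : ℕ} (h : w = z * q ^ n) :
    thetaPochN p q z (n + 1) = thetaPochN p q z n * theta p w := by
  rw [h]; exact Finset.prod_range_succ _ _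

lemma P_add {p q z w : ℂ} {n : ℕ} (m : ℕ) (h : w = z * q ^ n) :
    thetaPochN p q z (n + m) = thetaPochN p q z n * thetaPochN p q w m := by
  rw [h]; unfold thetaPochN
  rw [Finset.prod_range_add]
  congr 1
  exact Finset.prod_congr rfl fun j _ => by rw [pow_add]; ring_nf

lemma P_first {p q z w : ℂ} {n : ℕ} (h : w = z * q) :
    thetaPochN p q z (n + 1) = theta p z * thetaPochN p q w n := by
  rw [add_comm, P_add (w := w) n (by simpa using h)]
  simp [thetaPochN]

lemma P_ne {p q z : ℂ} (h : ∀ j : ℕ, theta p (z * q ^ j) ≠ 0) (n : ℕ) :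
    thetaPochN p q z n ≠ 0 := Finset.prod_ne_zero_iff.mpr fun j _ => h j

lemma shift_ne {p q z : ℂ} (h : ∀ j : ℕ, theta p (z * q ^ j) ≠ 0) (i : ℕ) (w : ℂ)
    (hw : w = z * q ^ i) : ∀ j : ℕ, theta p (w * q ^ j) ≠ 0 := by
  intro j
  have := h (i + j)
  rwa [pow_add, ← mul_assoc, ← hw] at this

/-- Quotient of Pochhammer symbols. -/
noncomputable def Rr (p q b c d B C D : ℂ) (j : ℕ) : ℂ :=
  thetaPochN p q b j * thetaPochN p q c j * thetaPochN p q d j /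
    (thetaPochN p q B j * thetaPochN p q C j * thetaPochN p q D j)

/-- Summand of the Frenkel-Turaev sum. -/
noncomputable def TT (p q g a b c d B C D : ℂ) (n j : ℕ) : ℂ :=
  thetaPochN p q (a * g * q ^ n) j * thetaPochN p q g (n - j) /
    (thetaPochN p q q j * thetaPochN p q q (n - j)) * theta p (a * q ^ (2 * j)) *
    (thetaPochN p q a j / thetaPochN p q a (n + j + 1)) * Rr p q b c d B C D j * g ^ j

lemma Rr_shift {p q b c d B C D : ℂ} (j : ℕ) :
    theta p b * theta p c * theta p d / (theta p B * theta p C * theta p D) *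
      Rr p q (b * q) (c * q) (d * q) (B * q) (C * q) (D * q) j
      = Rr p q b c d B C D (j + 1) := by
  unfold Rr
  rw [P_first (z := b) rfl, P_first (z := c) rfl, P_first (z := d) rfl, P_first (z := B) rfl,
    P_first (z := C) rfl, P_first (z := D) rfl, div_mul_div_comm]
  congr 1 <;> ring

lemma TT_shift {p q g a b c d B C D : ℂ} (hq0 : q ≠ 0)
    (ha : ∀ j : ℕ, theta p (a * q ^ j) ≠ 0)
    (n j : ℕ) (hj : j ≤ n) :
    theta p b * theta p c * theta p d / (theta p B * theta p C * theta p D) * (g * q ^ n) *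
      TT p q (g / q) (a * q ^ 2) (b * q) (c * q) (d * q) (B * q) (C * q) (D * q) n j
    = thetaPochN p q (a * g * q ^ (n + 1)) j * thetaPochN p q (g / q) (n - j) /
      (thetaPochN p q q j * thetaPochN p q q (n - j)) * theta p (a * q ^ (2 * (j + 1))) *
      (thetaPochN p q a (j + 2) / thetaPochN p q a (n + j + 3)) * Rr p q b c d B C D (j + 1) *
      g ^ (j + 1) * q ^ (n - j) := by
  rw [← Rr_shift]
  unfold TT
  have e1 : a * q ^ 2 * (g / q) * q ^ n = a * g * q ^ (n + 1) := by
    rw [pow_succ]; field_simp; try ring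
  have e2 : a * q ^ 2 * q ^ (2 * j) = a * q ^ (2 * (j + 1)) := by ring
  have e3 : thetaPochN p q a (j + 2) = thetaPochN p q a 2 * thetaPochN p q (a * q ^ 2) j := by
    rw [add_comm, P_add j rfl]
  have e4 : thetaPochN p q a (n + j + 3)
      = thetaPochN p q a 2 * thetaPochN p q (a * q ^ 2) (n + j + 1) := by
    rw [show n + j + 3 = 2 + (n + j + 1) by ring, P_add _ rfl]
  have e5 : (g / q) ^ j * (g * q ^ n) = g ^ (j + 1) * q ^ (n - j) := by
    have : q ^ n = q ^ (n - j) * q ^ j := by rw [← pow_add]; congr 1; omega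
    rw [this, div_pow]; field_simp; try ring
  rw [e1, e2, e3, e4, mul_div_mul_left _ _ (P_ne ha 2), mul_assoc _ (g ^ (j + 1)), ← e5]
  ring

lemma theta_add' {p : ℂ} (hp : ‖p‖ < 1) (x y u v : ℂ) (hx : x ≠ 0) (hy : y ≠ 0) (hu : u ≠ 0)
    (hv : v ≠ 0) {z1 z2 z3 z4 z5 z6 z7 z8 z9 z10 z11 z12 : ℂ}
    (h1 : z1 = x * y) (h2 : z2 * y = x) (h3 : z3 = u * v) (h4 : z4 * v = u)
    (h5 : z5 = x * v) (h6 : z6 * v = x) (h7 : z7 = u * y) (h8 : z8 * y = u)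
    (h9 : z9 = y * v) (h10 : z10 * v = y) (h11 : z11 = x * u) (h12 : z12 * u = x) :
    theta p z1 * theta p z2 * (theta p z3 * theta p z4)
      - theta p z5 * theta p z6 * (theta p z7 * theta p z8)
      = z8 * (theta p z9 * theta p z10 * (theta p z11 * theta p z12)) := by
  have e := theta_add hp hx hy hu hv
  rw [← eq_div_iff hy] at h2 h8
  rw [← eq_div_iff hv] at h4 h6 h10
  rw [← eq_div_iff hu] at h12
  rw [h1, h2, h3, h4, h5, h6, h7, h8, h9, h10, h11, h12]
  exact e

lemma add1 {p q g a : ℂ} (hp : ‖p‖ < 1) (hq0 : q ≠ 0) (ha : a ≠ 0) (hg : g ≠ 0) (j e : ℕ) :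
    theta p (a * g * q ^ (j + 1 + e + 1 + j)) * theta p (g * q ^ e) *
        (theta p (a * q ^ (j + 1 + e + 1)) * theta p (q ^ (j + 1 + e + 1)))
      - theta p (a * g * q ^ (j + 1 + e)) * theta p (g * q ^ (j + 1 + e)) *
        (theta p (a * q ^ (j + 1 + e + j + 2)) * theta p (q ^ (e + 1)))
      = q ^ (e + 1) * (theta p (a * q ^ (j + 1)) * theta p (q ^ (j + 1)) *
        (theta p (a * g * q ^ (2 * (j + 1 + e) + 1)) * theta p (g / q))) := by
  obtain ⟨v, rfl⟩ := IsAlgClosed.exists_pow_nat_eq a two_pos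
  have hv0 : v ≠ 0 := by rintro rfl; simp at ha
  refine theta_add' hp (v * g * q ^ (j + 1 + e)) (v * q ^ (j + 1)) (v * q ^ (j + 1 + e + 1)) v
    (by positivity) (by positivity) (by positivity) hv0 ?_ ?_ ?_ ?_ ?_ ?_ ?_ ?_ ?_ ?_ ?_ ?_
  all_goals first | ring1 | (field_simp; done) | (field_simp; ring1)

lemma add2 {p X b c d : ℂ} (hp : ‖p‖ < 1) (hX : X ≠ 0) (hb : b ≠ 0) (hc : c ≠ 0) (hd : d ≠ 0) :
    theta p X * theta p (X / (b * c)) * (theta p (X / (b * d)) * theta p (X / (c * d)))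
      - theta p (X / b) * theta p (X / c) * (theta p (X / d) * theta p (X / (b * c * d)))
      = X / (b * c * d) * (theta p c * theta p b * (theta p (X * X / (b * c * d)) * theta p d)) := by
  obtain ⟨v, hv⟩ := IsAlgClosed.exists_pow_nat_eq (c / b) two_pos
  have hv0 : v ≠ 0 := by
    rintro rfl
    have : c / b ≠ 0 := div_ne_zero hc hb
    simp at hv; tauto
  have hcv : c = v ^ 2 * b := by rw [hv]; field_simp
  subst hcv
  refine theta_add' hp (X / (b * v)) (v * b) (X / (b * v * d)) v
    (by positivity) (by positivity) (by positivity) hv0 ?_ ?_ ?_ ?_ ?_ ?_ ?_ ?_ ?_ ?_ ?_ ?_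
  all_goals first | ring1 | (field_simp; done) | (field_simp; ring1)

variable {p q g a b c d B C D : ℂ}

/-- Index-zero step. -/
lemma TT_step_zero (hqn : ∀ j : ℕ, theta p (q * q ^ j) ≠ 0)
    (han : ∀ j : ℕ, theta p (a * q ^ j) ≠ 0) (n : ℕ) :
    TT p q g a b c d B C D (n + 1) 0
      = theta p (g * q ^ n) / (theta p (q ^ (n + 1)) * theta p (a * q ^ (n + 1))) *
        TT p q g a b c d B C D n 0 := by
  unfold TT Rr
  simp only [P_zero, Nat.sub_zero, mul_zero, pow_zero, mul_one, add_zero, one_mul, div_one]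
  rw [P_last (z := g) (n := n) rfl, P_last (z := q) (w := q ^ (n + 1)) (n := n) (by ring),
    P_last (z := a) (n := n + 1) rfl]
  have h1 := P_ne hqn n
  have h2 := P_ne han (n + 1)
  have h3 := han (n + 1)
  have h4 := hqn n
  rw [← pow_succ'] at h4
  field_simp

/-- Constant of the second term of the recursion. -/
noncomputable def kap (p q g a b c d B C D : ℂ) (n : ℕ) : ℂ :=
  theta p (a * g * q ^ (2 * n + 1)) / (theta p (q ^ (n + 1)) * theta p (a * q ^ (n + 1))) *
  (theta p b * theta p c * theta p d / (theta p B * theta p C * theta p D) * (g * q ^ n))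

lemma TT_step_top (hq0 : q ≠ 0) (hqn : ∀ j : ℕ, theta p (q * q ^ j) ≠ 0)
    (han : ∀ j : ℕ, theta p (a * q ^ j) ≠ 0) (n : ℕ) :
    TT p q g a b c d B C D (n + 1) (n + 1)
      = kap p q g a b c d B C D n *
        TT p q (g / q) (a * q ^ 2) (b * q) (c * q) (d * q) (B * q) (C * q) (D * q) n n := by
  unfold kap
  rw [mul_assoc, TT_shift hq0 han n n le_rfl]
  unfold TT
  simp only [P_zero, Nat.sub_self, pow_zero, mul_one]
  rw [P_last (z := a * g * q ^ (n + 1)) (w := a * g * q ^ (2 * n + 1)) (n := n) (by ring),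
    P_last (z := q) (w := q ^ (n + 1)) (n := n) (by ring),
    P_last (z := a) (n := n + 1) rfl, show n + 1 + (n + 1) + 1 = n + n + 3 by ring]
  have h1 := P_ne hqn n
  have h2 := P_ne han (n + n + 3)
  have h3 := han (n + 1)
  have h4 := hqn n
  rw [← pow_succ'] at h4
  field_simp

lemma TT_step (hp : ‖p‖ < 1) (hq0 : q ≠ 0) (hqn : ∀ j : ℕ, theta p (q * q ^ j) ≠ 0)
    (han : ∀ j : ℕ, theta p (a * q ^ j) ≠ 0) (ha : a ≠ 0) (hg : g ≠ 0) (n j : ℕ) (hj : j < n) :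
    TT p q g a b c d B C D (n + 1) (j + 1)
      = theta p (g * q ^ n) / (theta p (q ^ (n + 1)) * theta p (a * q ^ (n + 1))) *
        TT p q g a b c d B C D n (j + 1) +
        kap p q g a b c d B C D n *
        TT p q (g / q) (a * q ^ 2) (b * q) (c * q) (d * q) (B * q) (C * q) (D * q) n j := by
  unfold kap
  rw [mul_assoc (_ / _), TT_shift hq0 han n j hj.le]
  obtain ⟨e, he⟩ := Nat.exists_eq_add_of_le (Nat.succ_le_of_lt hj)
  have hn : n = j + 1 + e := he
  subst hn
  have key := add1 hp hq0 ha hg j e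
  unfold TT
  rw [show j + 1 + e + 1 - (j + 1) = e + 1 by omega, show j + 1 + e - (j + 1) = e by omega,
    show j + 1 + e - j = e + 1 by omega]
  rw [P_last (z := a * g * q ^ (j + 1 + e + 1)) (w := a * g * q ^ (j + 1 + e + 1 + j)) (n := j)
      (by ring),
    P_first (z := a * g * q ^ (j + 1 + e)) (w := a * g * q ^ (j + 1 + e + 1)) (by ring),
    P_first (z := g / q) (w := g) (by field_simp),
    P_last (z := g) (n := e) rfl,
    P_last (z := q) (w := q ^ (j + 1)) (n := j) (by ring),
    P_last (z := q) (w := q ^ (e + 1)) (n := e) (by ring),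
    P_last (z := a) (n := j + 1) rfl,
    show j + 1 + e + 1 + (j + 1) + 1 = (j + 1 + e + j + 2) + 1 by ring,
    show j + 1 + e + (j + 1) + 1 = (j + 1 + e + j + 2) by ring,
    show j + 1 + e + j + 3 = (j + 1 + e + j + 2) + 1 by ring,
    P_last (z := a) (n := j + 1 + e + j + 2) rfl]
  have h1 := P_ne hqn j
  have h2 := P_ne hqn e
  have h3 := P_ne han (j + 1 + e + j + 2)
  have h4 := han (j + 1 + e + j + 2)
  have h5 := han (j + 1 + e + 1)
  have h6 := hqn (j + 1 + e)
  have h7 := hqn j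
  have h8 := hqn e
  rw [← pow_succ'] at h6 h7 h8
  generalize theta p (a * g * q ^ (j + 1 + e + 1 + j)) = x1 at *
  generalize theta p (g * q ^ e) = x2 at *
  generalize theta p (a * q ^ (j + 1 + e + 1)) = x3 at *
  generalize theta p (q ^ (j + 1 + e + 1)) = x4 at *
  generalize theta p (a * g * q ^ (j + 1 + e)) = x5 at *
  generalize theta p (g * q ^ (j + 1 + e)) = x6 at *
  generalize theta p (a * q ^ (j + 1 + e + j + 2)) = x7 at *
  generalize theta p (q ^ (e + 1)) = x8 at *
  generalize theta p (a * q ^ (j + 1)) = x9 at *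
  generalize theta p (q ^ (j + 1)) = x10 at *
  generalize theta p (a * g * q ^ (2 * (j + 1 + e) + 1)) = x11 at *
  generalize theta p (g / q) = x12 at *
  generalize thetaPochN p q a (j + 1 + e + j + 2) = y1 at *
  generalize thetaPochN p q q j = y2 at *
  generalize thetaPochN p q q e = y3 at *
  generalize thetaPochN p q g e = y4 at *
  generalize thetaPochN p q a (j + 1) = y5 at *
  generalize thetaPochN p q (a * g * q ^ (j + 1 + e + 1)) j = y6 at *
  generalize Rr p q b c d B C D (j + 1) = y7 at *
  generalize theta p (a * q ^ (2 * (j + 1))) = y8 at *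
  generalize q ^ (e + 1) = y9 at *
  generalize g ^ (j + 1) = y10 at *
  have hx : x1 * x2 = (x5 * x6 * (x7 * x8) + y9 * (x9 * x10 * (x11 * x12))) / (x3 * x4) := by
    rw [eq_div_iff (mul_ne_zero h5 h6)]
    linear_combination key
  calc _ = (x1 * x2) * (y6 * y4 / (y2 * x10 * (y3 * x8)) * y8 * (y5 / (y1 * x7)) * y7 * y10) := by
        ring
    _ = _ := by
        rw [hx]
        field_simp

/-- The Frenkel-Turaev summation. -/
lemma frenkel_turaev (hp : ‖p‖ < 1) (hq0 : q ≠ 0) (hqn : ∀ j : ℕ, theta p (q * q ^ j) ≠ 0)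
    (n : ℕ) : ∀ (g a b c d B C D : ℂ), a ≠ 0 → b ≠ 0 → c ≠ 0 → d ≠ 0 →
    g * (b * c * d) = a * q → B * b = a * q → C * c = a * q → D * d = a * q →
    (∀ j : ℕ, theta p (a * q ^ j) ≠ 0) → (∀ j : ℕ, theta p (B * q ^ j) ≠ 0) →
    (∀ j : ℕ, theta p (C * q ^ j) ≠ 0) → (∀ j : ℕ, theta p (D * q ^ j) ≠ 0) →
    ∑ j ∈ Finset.range (n + 1), TT p q g a b c d B C D n j
      = thetaPochN p q (B / c) n * thetaPochN p q (B / d) n * thetaPochN p q (C / d) n /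
        (thetaPochN p q q n * thetaPochN p q B n * thetaPochN p q C n * thetaPochN p q D n) := by
  induction n with
  | zero =>
    intro g a b c d B C D ha hb hc hd hg hB hC hD han hBn hCn hDn
    have h := han 0
    simp only [pow_zero, mul_one] at h
    simp [TT, Rr, P_zero]
    simp [thetaPochN, h]
  | succ n ih =>
    intro g a b c d B C D ha hb hc hd hg hB hC hD han hBn hCn hDn
    have hg0 : g ≠ 0 := by
      rintro rfl
      simp [ha, hq0] at hg
    have I1 := ih g a b c d B C D ha hb hc hd hg hB hC hD han hBn hCn hDn
    have I2 := ih (g / q) (a * q ^ 2) (b * q) (c * q) (d * q) (B * q) (C * q) (D * q)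
      (by positivity) (by positivity) (by positivity) (by positivity)
      (by field_simp; linear_combination hg)
      (by linear_combination q ^ 2 * hB) (by linear_combination q ^ 2 * hC)
      (by linear_combination q ^ 2 * hD)
      (shift_ne han 2 _ rfl) (shift_ne hBn 1 _ (by ring)) (shift_ne hCn 1 _ (by ring))
      (shift_ne hDn 1 _ (by ring))
    have hsum : ∑ j ∈ Finset.range (n + 1 + 1), TT p q g a b c d B C D (n + 1) j
        = theta p (g * q ^ n) / (theta p (q ^ (n + 1)) * theta p (a * q ^ (n + 1))) *
          ∑ j ∈ Finset.range (n + 1), TT p q g a b c d B C D n j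
          + kap p q g a b c d B C D n *
          ∑ j ∈ Finset.range (n + 1),
            TT p q (g / q) (a * q ^ 2) (b * q) (c * q) (d * q) (B * q) (C * q) (D * q) n j := by
      rw [Finset.sum_range_succ', TT_step_zero hqn han, Finset.sum_range_succ,
        TT_step_top hq0 hqn han,
        Finset.sum_congr rfl (fun j hj => TT_step hp hq0 hqn han ha hg0 n j
          (Finset.mem_range.mp hj)),
        Finset.sum_add_distrib, ← Finset.mul_sum, ← Finset.mul_sum,
        Finset.sum_range_succ' (fun j => TT p q g a b c d B C D n j),
        Finset.sum_range_succ (fun j =>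
          TT p q (g / q) (a * q ^ 2) (b * q) (c * q) (d * q) (B * q) (C * q) (D * q) n j)]
      ring
    rw [hsum, I1, I2]
    have hX : a * q ^ (n + 1) ≠ 0 := by positivity
    have key := add2 hp hX hb hc hd
    rw [← eq_div_iff hb] at hB
    rw [← eq_div_iff hc] at hC
    rw [← eq_div_iff hd] at hD
    rw [← eq_div_iff (by positivity)] at hg
    have e1 : a * q ^ (n + 1) / (b * c) = B / c * q ^ n := by rw [hB]; field_simp; ring
    have e2 : a * q ^ (n + 1) / (b * d) = B / d * q ^ n := by rw [hB]; field_simp; ring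
    have e3 : a * q ^ (n + 1) / (c * d) = C / d * q ^ n := by rw [hC]; field_simp; ring
    have e4 : a * q ^ (n + 1) / b = B * q ^ n := by rw [hB]; field_simp; ring
    have e5 : a * q ^ (n + 1) / c = C * q ^ n := by rw [hC]; field_simp; ring
    have e6 : a * q ^ (n + 1) / d = D * q ^ n := by rw [hD]; field_simp; ring
    have e7 : a * q ^ (n + 1) / (b * c * d) = g * q ^ n := by rw [hg]; field_simp; ring
    have e8 : a * q ^ (n + 1) * (a * q ^ (n + 1)) / (b * c * d) = a * g * q ^ (2 * n + 1) := by
      rw [mul_div_assoc, e7]; ring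
    rw [e1, e2, e3, e4, e5, e6, e7, e8] at key
    have f1 : B * q / (c * q) = B / c := by field_simp
    have f2 : B * q / (d * q) = B / d := by field_simp
    have f3 : C * q / (d * q) = C / d := by field_simp
    rw [f1, f2, f3]
    unfold kap
    have g1 := P_last (p := p) (z := B) (q := q) (n := n) rfl
    have g2 := P_last (p := p) (z := C) (q := q) (n := n) rfl
    have g3 := P_last (p := p) (z := D) (q := q) (n := n) rfl
    have k1 := P_first (p := p) (z := B) (q := q) (n := n) rfl
    have k2 := P_first (p := p) (z := C) (q := q) (n := n) rfl
    have k3 := P_first (p := p) (z := D) (q := q) (n := n) rfl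
    rw [P_last (z := B / c) (n := n) rfl, P_last (z := B / d) (n := n) rfl,
      P_last (z := C / d) (n := n) rfl, P_last (z := q) (w := q ^ (n + 1)) (n := n) (by ring)]
    have n1 := P_ne hBn (n + 1)
    have n2 := P_ne hCn (n + 1)
    have n3 := P_ne hDn (n + 1)
    have n4 := P_ne hqn n
    have n5 := hqn n
    have n6 := han (n + 1)
    have n7 := hBn n
    have n8 := hCn n
    have n9 := hDn n
    have m1 := P_ne hBn n
    have m2 := P_ne hCn n
    have m3 := P_ne hDn n
    have o1 := hBn 0
    have o2 := hCn 0
    have o3 := hDn 0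
    simp only [pow_zero, mul_one] at o1 o2 o3
    rw [← pow_succ'] at n5
    have s1 : thetaPochN p q (B * q) n = thetaPochN p q B (n + 1) / theta p B := by
      rw [k1]; field_simp
    have s2 : thetaPochN p q (C * q) n = thetaPochN p q C (n + 1) / theta p C := by
      rw [k2]; field_simp
    have s3 : thetaPochN p q (D * q) n = thetaPochN p q D (n + 1) / theta p D := by
      rw [k3]; field_simp
    rw [s1, s2, s3, g1, g2, g3]
    clear g1 g2 g3 k1 k2 k3 s1 s2 s3 I1 I2 hsum n1 n2 n3 e1 e2 e3 e4 e5 e6 e7 e8 f1 f2 f3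
    clear ih hBn hCn hDn han hqn
    generalize theta p (a * q ^ (n + 1)) = x1 at *
    generalize theta p (B / c * q ^ n) = x2 at *
    generalize theta p (B / d * q ^ n) = x3 at *
    generalize theta p (C / d * q ^ n) = x4 at *
    generalize theta p (B * q ^ n) = x5 at *
    generalize theta p (C * q ^ n) = x6 at *
    generalize theta p (D * q ^ n) = x7 at *
    generalize theta p (g * q ^ n) = x8 at *
    generalize theta p (a * g * q ^ (2 * n + 1)) = x9 at *
    generalize theta p (q ^ (n + 1)) = x10 at *
    generalize thetaPochN p q B n = y1 at *
    generalize thetaPochN p q C n = y2 at *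
    generalize thetaPochN p q D n = y3 at *
    generalize thetaPochN p q q n = y4 at *
    generalize thetaPochN p q (B / c) n = y5 at *
    generalize thetaPochN p q (B / d) n = y6 at *
    generalize thetaPochN p q (C / d) n = y7 at *
    generalize theta p B = z1 at *
    generalize theta p C = z2 at *
    generalize theta p D = z3 at *
    generalize theta p b = z4 at *
    generalize theta p c = z5 at *
    generalize theta p d = z6 at *
    generalize g * q ^ n = w at *
    have hx : x2 * x3 * x4 = (x5 * x6 * x7 * x8 + w * (z5 * z4 * z6 * x9)) / x1 := by
      rw [eq_div_iff n6]
      linear_combination key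
    have : y5 * x2 * (y6 * x3) * (y7 * x4) = y5 * y6 * y7 * (x2 * x3 * x4) := by ring
    rw [this, hx]
    field_simp

end FT

set_option maxHeartbeats 1000000 in
theorem matrix_bailey_lemma (p q t a k b c : ℂ) (hp : ‖p‖ < 1) (hq : ‖q‖ < 1)
    (ht : t ≠ 0) (ha : a ≠ 0) (hk : k ≠ 0) (hb : b ≠ 0) (hc : c ≠ 0)
    (hbal : k * b * c = q * a * t)
    (hgen : ∀ x ∈ ({a, t, q, q * a, q * t, q * a / b, q * a / c, q * t / b, q * t / c,
        q * k / (q * t / c), q * k / (q * t / b)} : Set ℂ), ∀ j : ℕ, theta p (x * q ^ j) ≠ 0)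
    (N m : ℕ) (hm : m ≤ N) :
    ∑ n ∈ Finset.Icc m N, Mmat p q a k N n * Dmat p q a b c n * Mmat p q t a n m
      = Dmat p q k (q * t / c) (q * t / b) N * Mmat p q t k N m * Dmat p q t b c m := by
  have hq0 : q ≠ 0 := by
    rintro rfl
    simp [hk, hb, hc] at hbal
  have gen : ∀ x ∈ ({a, t, q, q * a, q * t, q * a / b, q * a / c, q * t / b, q * t / c,
        q * k / (q * t / c), q * k / (q * t / b)} : Set ℂ), ∀ j : ℕ, theta p (x * q ^ j) ≠ 0 := hgen
  have ga := gen a (by simp)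
  have gt := gen t (by simp)
  have gq := gen q (by simp)
  have gqa := gen (q * a) (by simp)
  have gqt := gen (q * t) (by simp)
  have gab := gen (q * a / b) (by simp)
  have gac := gen (q * a / c) (by simp)
  have gtb := gen (q * t / b) (by simp)
  have gtc := gen (q * t / c) (by simp)
  obtain ⟨L, rfl⟩ := Nat.exists_eq_add_of_le hm
  have hkk : k = q * a * t / (b * c) := by
    rw [eq_div_iff (by positivity)]; linear_combination hbal
  have FT := frenkel_turaev hp hq0 gq L (k / a) (a * q ^ (2 * m)) (b * q ^ m) (c * q ^ m) (a / t)
    (q * a / b * q ^ m) (q * a / c * q ^ m) (q * t * q ^ (2 * m))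
    (by positivity) (by positivity) (by positivity) (by positivity)
    (by field_simp; linear_combination (q ^ m) ^ 2 * hbal)
    (by field_simp; ring) (by field_simp; ring) (by field_simp)
    (shift_ne ga (2 * m) _ rfl) (shift_ne gab m _ rfl) (shift_ne gac m _ rfl)
    (shift_ne gqt (2 * m) _ rfl)
  have t0 := gt 0
  have a0 := ga 0
  simp only [pow_zero, mul_one] at t0 a0
  have hterm : ∀ j ∈ Finset.range (L + 1),
      Mmat p q a k (m + L) (m + j) * Dmat p q a b c (m + j) * Mmat p q t a (m + j) m
      = (thetaPochN p q k (m + L + m) * a ^ L * Dmat p q a b c m / thetaPochN p q (q * t) (2 * m) *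
        (theta p (t * q ^ (2 * m)) / theta p t)) *
        TT p q (k / a) (a * q ^ (2 * m)) (b * q ^ m) (c * q ^ m) (a / t)
          (q * a / b * q ^ m) (q * a / c * q ^ m) (q * t * q ^ (2 * m)) L j := by
    intro j hj
    have hj' : j ≤ L := by simpa [Nat.lt_succ_iff] using hj
    obtain ⟨r, rfl⟩ := Nat.exists_eq_add_of_le hj'
    unfold Mmat Dmat TT Rr
    rw [show m + (j + r) - (m + j) = r by omega, show m + j - m = j by omega,
      show j + r - j = r by omega]
    have q1 : thetaPochN p q (q * a) (m + (j + r) + (m + j)) =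
        thetaPochN p q a (2 * m) * thetaPochN p q (a * q ^ (2 * m)) (j + r + j + 1) / theta p a := by
      rw [← P_add _ rfl, eq_div_iff a0,
        show 2 * m + (j + r + j + 1) = (m + (j + r) + (m + j)) + 1 by ring,
        P_first (w := q * a) (by ring)]
      ring
    have q2 : thetaPochN p q k (m + (j + r) + (m + j)) = thetaPochN p q k (m + (j + r) + m) *
        thetaPochN p q (a * q ^ (2 * m) * (k / a) * q ^ (j + r)) j := by
      rw [← add_assoc, P_add]
      field_simp
      ring
    have q3 : thetaPochN p q a (m + j + m)
        = thetaPochN p q a (2 * m) * thetaPochN p q (a * q ^ (2 * m)) j := by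
      rw [← P_add _ rfl]; congr 1; ring
    have q4 : thetaPochN p q (q * t) (m + j + m)
        = thetaPochN p q (q * t) (2 * m) * thetaPochN p q (q * t * q ^ (2 * m)) j := by
      rw [← P_add _ rfl]; congr 1; ring
    rw [q1, q2, q3, q4, P_add (z := b) (n := m) j rfl, P_add (z := c) (n := m) j rfl,
      P_add (z := q * a / b) (n := m) j rfl, P_add (z := q * a / c) (n := m) j rfl]
    have w1 : a ^ r * (q * a / (b * c)) ^ (m + j) * t ^ j
        = a ^ (j + r) * (q * a / (b * c)) ^ m * (k / a) ^ j := by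
      have : k / a = q * t / (b * c) := by rw [hkk]; field_simp
      rw [this, pow_add, pow_add, mul_assoc (a ^ r), mul_assoc (_ ^ m), ← mul_pow,
        show q * a / (b * c) * t = a * (q * t / (b * c)) by ring, mul_pow]
      ring
    have w2 : a * q ^ (2 * (m + j)) = a * q ^ (2 * m) * q ^ (2 * j) := by ring
    rw [w2]
    have n1 := P_ne ga (2 * m)
    have z2 : (q * a / (b * c)) ^ (m + j) ≠ 0 := by positivity
    have z3 : t ^ j ≠ 0 := by positivity
    have n2 := P_ne gqt (2 * m)
    have n3 := P_ne gq j
    have n4 := P_ne gq r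
    have n5 := P_ne gab m
    have n6 := P_ne gac m
    have n7 := P_ne (shift_ne gab m _ rfl) j
    have n8 := P_ne (shift_ne gac m _ rfl) j
    have n9 := P_ne (shift_ne gqt (2 * m) _ rfl) j
    have n10 := P_ne (shift_ne ga (2 * m) _ rfl) (j + r + j + 1)
    clear FT gen hgen ga gt gq gqa gqt gab gac gtb gtc q1 q2 q3 q4 w2 hkk hbal hj hp hq
    generalize thetaPochN p q a (2 * m) = v1 at *
    generalize theta p a = v2 at *
    generalize a ^ r = W1 at *
    generalize (q * a / (b * c)) ^ (m + j) = W2 at *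
    generalize t ^ j = W3 at *
    generalize a ^ (j + r) = W4 at *
    generalize (q * a / (b * c)) ^ m = W5 at *
    generalize (k / a) ^ j = W6 at *
    generalize thetaPochN p q (a * q ^ (2 * m)) (j + r + j + 1) = u1 at *
    generalize thetaPochN p q (q * t * q ^ (2 * m)) j = u2 at *
    generalize thetaPochN p q (q * a / c * q ^ m) j = u3 at *
    generalize thetaPochN p q (q * a / b * q ^ m) j = u4 at *
    generalize thetaPochN p q (q * a / c) m = u5 at *
    generalize thetaPochN p q (q * a / b) m = u6 at *
    generalize thetaPochN p q (k / a) r = u7 at *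
    generalize thetaPochN p q (a / t) j = u8 at *
    generalize thetaPochN p q (a * q ^ (2 * m) * (k / a) * q ^ (j + r)) j = u9 at *
    generalize theta p (a * q ^ (2 * m) * q ^ (2 * j)) = u10 at *
    generalize theta p (t * q ^ (2 * m)) = u11 at *
    have hW : W1 = W4 * W5 * W6 / (W2 * W3) := by
      rw [eq_div_iff (mul_ne_zero z2 z3)]; linear_combination w1
    rw [hW]; clear hW
    have hc1 : v1⁻¹ * v1 * (v2 * v2⁻¹) * (W2⁻¹ * W2) * (W3⁻¹ * W3) = 1 := by
      rw [inv_mul_cancel₀ n1, mul_inv_cancel₀ a0, inv_mul_cancel₀ z2, inv_mul_cancel₀ z3]; norm_num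
    simp only [div_eq_mul_inv, mul_inv, inv_inv]
    generalize v1⁻¹ = i1 at *
    generalize v2⁻¹ = i2 at *
    generalize W2⁻¹ = i3 at *
    generalize W3⁻¹ = i4 at *
    linear_combination (thetaPochN p q k (m + (j + r) + m) * u9 * u7 * u1⁻¹ *
      (thetaPochN p q q r)⁻¹ * u10 * W4 * W5 * W6 * (thetaPochN p q b m *
      thetaPochN p q (b * q ^ m) j * (thetaPochN p q c m * thetaPochN p q (c * q ^ m) j)) *
      u6⁻¹ * u4⁻¹ * u5⁻¹ * u3⁻¹ * thetaPochN p q (a * q ^ (2 * m)) j * u8 *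
      (thetaPochN p q (q * t) (2 * m))⁻¹ * u2⁻¹ * (thetaPochN p q q j)⁻¹ *
      u11 * (theta p t)⁻¹) * hc1
  have hreindex : ∑ n ∈ Finset.Icc m (m + L),
      Mmat p q a k (m + L) n * Dmat p q a b c n * Mmat p q t a n m
      = ∑ j ∈ Finset.range (L + 1),
      Mmat p q a k (m + L) (m + j) * Dmat p q a b c (m + j) * Mmat p q t a (m + j) m := by
    rw [← Finset.Ico_add_one_right_eq_Icc, Finset.sum_Ico_eq_sum_range]
    rw [show m + L + 1 - m = L + 1 by omega]
  rw [hreindex, Finset.sum_congr rfl hterm, ← Finset.mul_sum, FT]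
  have e1 : q * a / b * q ^ m / (c * q ^ m) = k / t := by rw [hkk]; field_simp
  have e2 : q * a / b * q ^ m / (a / t) = q * t / b * q ^ m := by field_simp
  have e3 : q * a / c * q ^ m / (a / t) = q * t / c * q ^ m := by field_simp
  have e4 : q * k / (q * t / c) = q * a / b := by rw [hkk]; field_simp
  have e5 : q * k / (q * t / b) = q * a / c := by rw [hkk]; field_simp
  have e6 : q * k / (q * t / c * (q * t / b)) = a / t := by rw [hkk]; field_simp
  rw [e1, e2, e3]
  unfold Dmat Mmat
  rw [e4, e5, e6, show m + L - m = L by omega]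
  have q4 : thetaPochN p q (q * t) (m + L + m)
        = thetaPochN p q (q * t) (2 * m) * thetaPochN p q (q * t * q ^ (2 * m)) L := by
      rw [← P_add _ rfl]; congr 1; ring
  rw [q4, P_add (z := q * t / c) (n := m) L rfl, P_add (z := q * t / b) (n := m) L rfl,
    P_add (z := q * a / b) (n := m) L rfl, P_add (z := q * a / c) (n := m) L rfl]
  have n1 := P_ne gtb m
  have n2 := P_ne gtc m
  have w : a ^ L * (q * a / (b * c)) ^ m = (a / t) ^ (m + L) * t ^ L * (q * t / (b * c)) ^ m := by
    rw [show q * a / (b * c) = (a / t) * (q * t / (b * c)) by field_simp, mul_pow, pow_add,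
      div_pow a t L]
    field_simp
  have z1 : (q * a / (b * c)) ^ m ≠ 0 := by positivity
  have n3 := P_ne gq L
  have n4 := P_ne gqt (2 * m)
  have n5 := P_ne gab m
  have n6 := P_ne gac m
  have n7 := P_ne (shift_ne gab m _ rfl) L
  have n8 := P_ne (shift_ne gac m _ rfl) L
  have n9 := P_ne (shift_ne gqt (2 * m) _ rfl) L
  clear FT gen hgen ga gt gq gqa gqt gab gac gtb gtc q4 e1 e2 e3 e4 e5 e6 hkk hbal hp hq hterm hreindex
  generalize thetaPochN p q (q * t / b * q ^ m) L = u1 at *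
  generalize thetaPochN p q (q * t / c * q ^ m) L = u2 at *
  generalize thetaPochN p q (q * a / b * q ^ m) L = u3 at *
  generalize thetaPochN p q (q * a / c * q ^ m) L = u4 at *
  generalize thetaPochN p q (q * a / b) m = u5 at *
  generalize thetaPochN p q (q * a / c) m = u6 at *
  generalize thetaPochN p q (q * t * q ^ (2 * m)) L = u7 at *
  generalize thetaPochN p q (k / t) L = u8 at *
  generalize theta p (t * q ^ (2 * m)) = u9 at *
  generalize a ^ L = W1 at *
  generalize (q * a / (b * c)) ^ m = W2 at *
  generalize (a / t) ^ (m + L) = W3 at *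
  generalize t ^ L = W4 at *
  generalize (q * t / (b * c)) ^ m = W5 at *
  generalize thetaPochN p q (q * t / b) m = v1 at *
  generalize thetaPochN p q (q * t / c) m = v2 at *
  have hW : W1 = W3 * W4 * W5 / W2 := by
    rw [eq_div_iff z1]; exact w
  rw [hW]; clear hW
  have hc1 : W2⁻¹ * W2 = 1 := inv_mul_cancel₀ z1
  have hc2 : v1 * v1⁻¹ * (v2 * v2⁻¹) = 1 := by
    rw [mul_inv_cancel₀ n1, mul_inv_cancel₀ n2, one_mul]
  linear_combination (thetaPochN p q k (m + L + m) * W3 * W4 * W5 * thetaPochN p q b m *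
    thetaPochN p q c m * u5⁻¹ * u6⁻¹ * (thetaPochN p q (q * t) (2 * m))⁻¹ * u9 * (theta p t)⁻¹ *
    u8 * u1 * u2 * (thetaPochN p q q L)⁻¹ * u3⁻¹ * u4⁻¹ * u7⁻¹) * (hc1 - hc2)
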